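/- Let R be a ring. If M and N are pure-injective left R-modules and there exist pure embeddings f : M → N and g : N → M, then M and N are isomorphic as R-modules. -/

import Mathlib

open Cardinal

universe u v

def IsPureMap (R : Type u) [Ring R] {M N : Type v}
    [AddCommGroup M] [Module R M] [AddCommGroup N] [Module R N]
    (f : M →ₗ[R] N) : Prop :=
  ∀ (m k : ℕ) (a : Fin m → Fin k → R) (b : Fin m → M),
    (∃ x : Fin k → N, ∀ i, ∑ j, a i j • x j = f (b i)) →
    (∃ x : Fin k → M, ∀ i, ∑ j, a i j • x j = b i)

def PureInjective (R : Type u) [Ring R] (M : Type v) [AddCommGroup M] [Module R M] : Prop :=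
  ∀ (N : Type v) [AddCommGroup N] [Module R N], ∀ f : M →ₗ[R] N,
    Function.Injective f → IsPureMap R f → ∃ g : N →ₗ[R] M, g ∘ₗ f = LinearMap.id

namespace PureInjective

section

variable {R : Type u} [Ring R]

/-- Every finite system of linear equations with constants `u b` solvable in the codomain of `u`
becomes solvable in the codomain of `v` after replacing the constants by `v b`. -/
def SolvLE {A B C : Type*} [AddCommGroup A] [Module R A] [AddCommGroup B] [Module R B]
    [AddCommGroup C] [Module R C] (u : A →ₗ[R] B) (v : A →ₗ[R] C) : Prop :=
  ∀ (m k : ℕ) (a : Fin m → Fin k → R) (b : Fin m → A),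
    (∃ x : Fin k → B, ∀ i, ∑ j, a i j • x j = u (b i)) →
    (∃ x : Fin k → C, ∀ i, ∑ j, a i j • x j = v (b i))

theorem SolvLE.trans {A B C D : Type*} [AddCommGroup A] [Module R A] [AddCommGroup B] [Module R B]
    [AddCommGroup C] [Module R C] [AddCommGroup D] [Module R D]
    {u : A →ₗ[R] B} {v : A →ₗ[R] C} {w : A →ₗ[R] D}
    (h₁ : SolvLE u v) (h₂ : SolvLE v w) : SolvLE u w :=
  fun m k a b h => h₂ m k a b (h₁ m k a b h)

theorem solvLE_comp {A B C : Type*} [AddCommGroup A] [Module R A] [AddCommGroup B] [Module R B]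
    [AddCommGroup C] [Module R C] (u : A →ₗ[R] B) (t : B →ₗ[R] C) : SolvLE u (t ∘ₗ u) := by
  rintro m k a b ⟨x, hx⟩
  exact ⟨fun j => t (x j), fun i => by simp [← hx i]⟩

theorem _root_.IsPureMap.injective {M N : Type v} [AddCommGroup M] [Module R M]
    [AddCommGroup N] [Module R N] {f : M →ₗ[R] N} (hf : IsPureMap R f) :
    Function.Injective f := by
  rw [injective_iff_map_eq_zero]
  intro b hb
  obtain ⟨x, hx⟩ := hf 1 0 (fun _ _ => 0) (fun _ => b) ⟨fun _ => 0, fun _ => by simp [hb]⟩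
  simpa using (hx 0).symm

/-- A map into a pure-injective module extends along any map that creates no new solutions. -/
theorem exists_extension {A B C : Type v} [AddCommGroup A] [Module R A]
    [AddCommGroup B] [Module R B] [AddCommGroup C] [Module R C] (hC : PureInjective R C)
    {u : A →ₗ[R] B} {v : A →ₗ[R] C} (huv : SolvLE u v) :
    ∃ r : B →ₗ[R] C, r ∘ₗ u = v := by
  let W : Submodule R (C × B) := LinearMap.range (v.prod (-u))
  have hpure : IsPureMap R (W.mkQ ∘ₗ LinearMap.inl R C B) := by
    rintro m k a b ⟨x, hx⟩
    choose y hy using fun j => W.mkQ_surjective (x j)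
    have hmem : ∀ i, ∑ j, a i j • y j - (b i, 0) ∈ W := by
      intro i
      rw [← Submodule.ker_mkQ W, LinearMap.mem_ker, map_sub, map_sum, sub_eq_zero]
      simp only [map_smul, hy]
      exact hx i
    choose z hz using hmem
    have hz₁ : ∀ i, v (z i) = ∑ j, a i j • (y j).1 - b i := by
      intro i
      simpa [Prod.fst_sum] using congrArg Prod.fst (hz i)
    have hz₂ : ∀ i, -u (z i) = ∑ j, a i j • (y j).2 := by
      intro i
      simpa [Prod.snd_sum] using congrArg Prod.snd (hz i)
    obtain ⟨w, hw⟩ := huv m k a z ⟨fun j => -(y j).2, fun i => by simp [← hz₂ i]⟩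
    exact ⟨fun j => (y j).1 - w j, fun i => by simp [smul_sub, hw i, hz₁ i]⟩
  obtain ⟨ρ, hρ⟩ := hC _ _ hpure.injective hpure
  refine ⟨ρ ∘ₗ W.mkQ ∘ₗ LinearMap.inr R C B, LinearMap.ext fun a => ?_⟩
  have h : W.mkQ (0, u a) = W.mkQ (v a, 0) := by
    rw [← sub_eq_zero, ← map_sub, ← LinearMap.mem_ker, Submodule.ker_mkQ]
    exact ⟨-a, by simp⟩
  simpa [h] using LinearMap.congr_fun hρ (v a)

/-- A family of endomorphisms of a pure-injective module has a limit along any proper filter. -/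
theorem exists_limit {N : Type v} [AddCommGroup N] [Module R N] (hN : PureInjective R N)
    {I : Type v} (l : Filter I) [l.NeBot] (s : I → N →ₗ[R] N) :
    ∃ t : N →ₗ[R] N, (∀ n c, (∀ᶠ i in l, s i n = c) → t n = c) ∧
      ∀ u : N →ₗ[R] N, (∀ᶠ i in l, SolvLE u (s i)) → SolvLE u t := by
  let Z : Submodule R (I → N) :=
    { carrier := {x | ∀ᶠ i in l, x i = 0}
      add_mem' := fun {x y} hx hy => by
        filter_upwards [hx, hy] with i h₁ h₂
        simp [h₁, h₂]
      zero_mem' := Filter.Eventually.of_forall fun _ => rfl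
      smul_mem' := fun r x hx => by
        filter_upwards [hx] with i h
        simp [h] }
  have hZ : ∀ x y : I → N, Z.mkQ x = Z.mkQ y ↔ ∀ᶠ i in l, x i = y i := by
    intro x y
    rw [← sub_eq_zero, ← map_sub, ← LinearMap.mem_ker, Submodule.ker_mkQ]
    exact Filter.eventually_congr (Filter.Eventually.of_forall fun i => by simp [sub_eq_zero])
  let δ : N →ₗ[R] (I → N) ⧸ Z := Z.mkQ ∘ₗ LinearMap.pi fun _ => LinearMap.id
  have hpure : IsPureMap R δ := by
    rintro m k a b ⟨x, hx⟩
    choose y hy using fun j => Z.mkQ_surjective (x j)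
    have key : ∀ i, ∀ᶠ p in l, ∑ j, a i j • y j p = b i := by
      intro i
      have : Z.mkQ (∑ j, a i j • y j) = Z.mkQ fun _ => b i := by
        simp only [map_sum, map_smul, hy]
        exact hx i
      simpa using (hZ _ _).1 this
    obtain ⟨p, hp⟩ := (Filter.eventually_all.2 key).exists
    exact ⟨fun j => y j p, hp⟩
  obtain ⟨ρ, hρ⟩ := hN _ _ hpure.injective hpure
  refine ⟨ρ ∘ₗ Z.mkQ ∘ₗ LinearMap.pi s, fun n c h => ?_, fun u hu => ?_⟩
  · have : Z.mkQ (LinearMap.pi s n) = δ c := (hZ _ _).2 h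
    simpa [this] using LinearMap.congr_fun hρ c
  · refine SolvLE.trans ?_ (solvLE_comp (Z.mkQ ∘ₗ LinearMap.pi s) ρ)
    intro m k a b h
    have hex : ∀ p, ∃ x : Fin k → N, SolvLE u (s p) → ∀ i, ∑ j, a i j • x j = s p (b i) := by
      intro p
      by_cases hp : SolvLE u (s p)
      · obtain ⟨x, hx⟩ := hp m k a b h
        exact ⟨x, fun _ => hx⟩
      · exact ⟨0, fun h => absurd h hp⟩
    choose x hx using hex
    refine ⟨fun j => Z.mkQ fun p => x p j, fun i => ?_⟩
    simp only [← map_smul, ← map_sum]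
    refine (hZ _ _).2 ?_
    filter_upwards [hu] with p hp
    simpa using hx p hp i

/-- A subset `S` of a pure-injective module `N` is contained in a summand `e N` every
endomorphism of which is a split monomorphism as soon as it fixes `S`. -/
theorem exists_hull {N : Type v} [AddCommGroup N] [Module R N] (hN : PureInjective R N)
    (S : Set N) :
    ∃ e : N →ₗ[R] N, (∀ n, e (e n) = e n) ∧ (∀ n ∈ S, e n = n) ∧
      ∀ t : N →ₗ[R] N, (∀ n ∈ S, t n = n) → ∃ r : N →ₗ[R] N, ∀ n, r (t (e n)) = e n := by
  let T := {t : N →ₗ[R] N // ∀ n ∈ S, t n = n}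
  let : Preorder T :=
    { le := fun s t => SolvLE s.1 t.1 ∧ (SolvLE t.1 s.1 → ∀ n, s.1 n = n → t.1 n = n)
      le_refl := fun s => ⟨fun _ _ _ _ h => h, fun _ _ h => h⟩
      le_trans := fun s t w h₁ h₂ => ⟨h₁.1.trans h₂.1, fun h n hn =>
        h₂.2 (h.trans h₁.1) n (h₁.2 (h₂.1.trans h) n hn)⟩ }
  have : Nonempty T := ⟨⟨LinearMap.id, fun _ _ => rfl⟩⟩
  obtain ⟨⟨s, hsS⟩, hs⟩ : ∃ s : T, IsMax s := by
    refine zorn_le_nonempty fun c hc hne => ?_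
    have : Nonempty c := hne.to_subtype
    have : IsDirectedOrder c := ⟨fun a b => by
      rcases hc.total a.2 b.2 with h | h
      · exact ⟨b, h, le_rfl⟩
      · exact ⟨a, le_rfl, h⟩⟩
    obtain ⟨t, ht₁, ht₂⟩ := exists_limit hN (Filter.atTop : Filter c) fun i => i.1.1
    refine ⟨⟨t, fun n hn => ht₁ n n (Filter.Eventually.of_forall fun i => i.1.2 n hn)⟩, ?_⟩
    intro a ha
    have hup : ∀ i : c, SolvLE i.1.1 t := fun i =>
      ht₂ _ ((Filter.eventually_ge_atTop i).mono fun j hj => hj.1)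
    refine ⟨hup ⟨a, ha⟩, fun h n hn => ht₁ n n ?_⟩
    filter_upwards [Filter.eventually_ge_atTop (⟨a, ha⟩ : c)] with j hj
    exact hj.2 ((hup j).trans h) n hn
  have hmax : ∀ t : N →ₗ[R] N, (∀ n ∈ S, t n = n) →
      ∃ r : N →ₗ[R] N, r ∘ₗ t ∘ₗ s = s := by
    intro t ht
    apply exists_extension hN
    by_contra hlt
    have hle := solvLE_comp s t
    have htS : ∀ n ∈ S, (t ∘ₗ s) n = n := fun n hn => by simp [hsS n hn, ht n hn]
    exact hlt (hs (b := ⟨t ∘ₗ s, htS⟩) ⟨hle, fun h => absurd h hlt⟩).1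
  refine ⟨s, ?_, hsS, fun t ht => (hmax t ht).imp fun r hr n => LinearMap.congr_fun hr n⟩
  obtain ⟨r, hr⟩ := hmax s hsS
  have hr' : ∀ n, r (s (s n)) = s n := fun n => LinearMap.congr_fun hr n
  have hrS : ∀ n ∈ S, (r ∘ₗ s) n = n := fun n hn => by
    have := hr' n
    simpa [hsS n hn] using this
  have hle := solvLE_comp s r
  have hback := hs (b := ⟨r ∘ₗ s, hrS⟩) ⟨hle, fun _ n hn => by
    have := hr' n
    simp only [show s n = n from hn] at this
    simpa [show s n = n from hn] using this⟩
  exact fun n => hback.2 hle (s n) (hr' n)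

/-- Two modules that are isomorphic to direct summands of each other are isomorphic as soon as
one of them is pure-injective. -/
theorem nonempty_linearEquiv_of_retracts {M N : Type v} [AddCommGroup M] [Module R M]
    [AddCommGroup N] [Module R N] (hN : PureInjective R N)
    (f : M →ₗ[R] N) (ρ : N →ₗ[R] M) (hρ : ∀ m, ρ (f m) = m)
    (g : N →ₗ[R] M) (σ : M →ₗ[R] N) (hσ : ∀ n, σ (g n) = n) :
    Nonempty (M ≃ₗ[R] N) := by
  let S : Set N := {n | ∃ (k : ℕ) (y : M), σ y = 0 ∧ (fun n => f (g n))^[k] (f y) = n}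
  have hfS : ∀ y, σ y = 0 → f y ∈ S := fun y hy => ⟨0, y, hy, rfl⟩
  have hfgS : ∀ n ∈ S, f (g n) ∈ S := by
    rintro _ ⟨k, y, hy, rfl⟩
    exact ⟨k + 1, y, hy, Function.iterate_succ_apply' _ _ _⟩
  have hS : ∀ n ∈ S, (∃ y, σ y = 0 ∧ f y = n) ∨ ∃ n' ∈ S, f (g n') = n := by
    rintro _ ⟨k, y, hy, rfl⟩
    cases k with
    | zero => exact Or.inl ⟨y, hy, rfl⟩
    | succ k => exact Or.inr ⟨_, ⟨k, y, hy, rfl⟩,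
        (Function.iterate_succ_apply' (fun n => f (g n)) k (f y)).symm⟩
  obtain ⟨e, hee, heS, hull⟩ := exists_hull hN S
  -- the projection onto `ker σ ⊕ g (e N)`
  let q : M →ₗ[R] M := LinearMap.id - g ∘ₗ σ + g ∘ₗ e ∘ₗ σ
  have hq : ∀ m, q m = m - g (σ m) + g (e (σ m)) := fun m => rfl
  have hσq : ∀ m, σ (q m) = e (σ m) := fun m => by simp [hq, hσ]
  have hqq : ∀ m, q (q m) = q m := fun m => by
    rw [hq (q m), hσq, hee, sub_add_cancel]
  have hqY : ∀ y, σ y = 0 → q y = y := fun y hy => by simp [hq, hy]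
  have hqg : ∀ n, q (g n) = g (e n) := fun n => by simp [hq, hσ]
  have hqS : ∀ n ∈ S, q (g n) = g n := fun n hn => by rw [hqg, heS n hn]
  obtain ⟨r, hr⟩ := hull (e ∘ₗ f ∘ₗ q ∘ₗ ρ) (by
    intro n hn
    have h : f (q (ρ n)) = n := by
      rcases hS n hn with ⟨y, hy, rfl⟩ | ⟨n', hn', rfl⟩
      · rw [hρ, hqY y hy]
      · rw [hρ, hqS n' hn']
    simp [h, heS n hn])
  let β : N →ₗ[R] M := q ∘ₗ ρ ∘ₗ e
  let lam : M →ₗ[R] N := e ∘ₗ r ∘ₗ e ∘ₗ f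
  have hlamβ : ∀ n, lam (β n) = e n := fun n => by
    rw [← hee n, ← hr n]; simp [lam, β]
  have hqβ : ∀ n, q (β n) = β n := fun n => hqq _
  have hβe : ∀ n, β (e n) = β n := fun n => by simp [β, hee]
  have helam : ∀ m, e (lam m) = lam m := fun m => hee _
  have hfix : ∀ m, f m ∈ S → q m = m → β (lam m) = m := by
    intro m hm hqm
    have h : β (f m) = m := by simp [β, heS _ hm, hρ, hqm]
    conv_lhs => rw [← h, hlamβ, hβe]
    exact h
  have hfixY : ∀ y, σ y = 0 → β (lam y) = y := fun y hy => hfix y (hfS y hy) (hqY y hy)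
  obtain ⟨r', hr'⟩ := hull (σ ∘ₗ β ∘ₗ lam ∘ₗ g) (by
    intro n hn
    simp [hfix (g n) (hfgS n hn) (hqS n hn), hσ])
  have hinj : ∀ d, q d = d → β (lam d) = 0 → d = 0 := by
    intro d hd h0
    have hy : σ (d - g (σ d)) = 0 := by simp [hσ]
    have heσ : e (σ d) = σ d := by rw [← hσq, hd]
    have h1 : β (lam (g (σ d))) = -(d - g (σ d)) := by
      have := hfixY _ hy
      rw [map_sub, map_sub, h0, zero_sub] at this
      rw [← this, neg_neg]
    have h2 : σ d = 0 := by
      have := hr' (σ d)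
      rw [heσ] at this
      rw [← this]
      simp [h1, hσ]
    rw [← hfixY d h2, h0]
  have hβlam : ∀ m, β (lam (q m)) = q m := by
    intro m
    refine (sub_eq_zero.1 (hinj (q m - β (lam (q m))) ?_ ?_)).symm
    · rw [map_sub, hqq, hqβ]
    · rw [map_sub, map_sub, hlamβ, helam, sub_self]
  refine ⟨LinearEquiv.ofLinearMap (lam ∘ₗ q + (LinearMap.id - e) ∘ₗ σ)
    (β + g ∘ₗ (LinearMap.id - e)) ?_ ?_⟩
  · ext n
    have hσβ : e (σ (β n)) = σ (β n) := by rw [← hσq, hqβ]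
    simp [hqβ, hlamβ, hqg, hee, hσ, hσβ]
  · ext m
    simp only [LinearMap.comp_apply, LinearMap.add_apply, LinearMap.sub_apply, LinearMap.id_apply,
      map_add, map_sub, hβlam, helam, hβe, hee]
    rw [hq]
    abel

end

end PureInjective

/-- Two pure-injective modules that purely embed into each other are isomorphic. -/
theorem pureInjective_bumby (R : Type u) [Ring R] (M N : Type u)
    [AddCommGroup M] [Module R M] [AddCommGroup N] [Module R N]
    (hM : PureInjective R M) (hN : PureInjective R N)
    (f : M →ₗ[R] N) (hf : Function.Injective f) (hfp : IsPureMap R f)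
    (g : N →ₗ[R] M) (hg : Function.Injective g) (hgp : IsPureMap R g) :
    Nonempty (M ≃ₗ[R] N) := by
  obtain ⟨ρ, hρ⟩ := hM N f hf hfp
  obtain ⟨σ, hσ⟩ := hN M g hg hgp
  exact PureInjective.nonempty_linearEquiv_of_retracts hN f ρ (LinearMap.congr_fun hρ) g σ
    (LinearMap.congr_fun hσ)
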